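/- arXiv:2502.20328 — 2 statements merged into one kernel-verified Lean document; each statement's English description precedes it below -/
import Mathlib

section
/- Let β_L, β_R > 0 and define 𝛃(p₁) := β_L if p₁ > 0 and 𝛃(p₁) := β_R if p₁ < 0. Then for every s ∈ ℝ with s ≠ 0, the function p ↦ (1/‖p‖)·cos(‖p‖ s)/(e^{𝛃(p₁)‖p‖} − 1) is integrable on ℝ³ and (2π)^{−3}·∫_{ℝ³} (1/‖p‖)·cos(‖p‖ s)/(e^{𝛃(p₁)‖p‖} − 1) dp = (1/(4π²))·(C_{β_L}(s) + C_{β_R}(s)). -/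
open MeasureTheory Real Set

/-- The function `C_β(s) = 1/(2s²) − (π²/(2β²))/sinh²(π s/β)` for `s ≠ 0`, extended
continuously by `C_β(0) := π²/(6β²)`. -/
noncomputable def Cfun (β s : ℝ) : ℝ :=
  if s = 0 then π ^ 2 / (6 * β ^ 2)
  else 1 / (2 * s ^ 2) - (π ^ 2 / (2 * β ^ 2)) / Real.sinh (π * s / β) ^ 2

/-!
Each thermal integrand is invariant under `p ↦ -p`, so the half-spaces `p₁ > 0` and `p₁ < 0`
contribute half of the full radial integral at the corresponding temperature. In spherical
coordinates that integral is `4π ∫₀^∞ r cos(rs) / (e^{βr} - 1) dr`. Expanding the Bose–Einstein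
factor as `∑ₙ e^{-(n+1)βr}` turns it into `4π ∑ₙ Re ((n+1)β - is)⁻²`, which the partial fraction
expansion `∑_{n ∈ ℤ} (z+n)⁻² = π² / sin²(πz)` evaluates at the imaginary point `z = is/β`.
-/

open Filter Topology

section PartialFractions

lemma hasDerivAt_cot {z : ℂ} (hz : Complex.sin z ≠ 0) :
    HasDerivAt Complex.cot (-(1 / Complex.sin z ^ 2)) z := by
  refine ((Complex.hasDerivAt_cos z).div (Complex.hasDerivAt_sin z) hz).congr_deriv ?_
  field_simp
  linear_combination (-1 : ℂ) * Complex.sin_sq_add_cos_sq z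

lemma hasSum_one_div_add_intCast_sq {z : ℂ} (hz : 0 < z.im) :
    HasSum (fun n : ℤ ↦ 1 / (z + n) ^ 2) (π ^ 2 / Complex.sin (π * z) ^ 2) := by
  have hsin : Complex.sin (π * z) ≠ 0 :=
    sin_pi_mul_ne_zero (UpperHalfPlane.coe_mem_integerComplement ⟨z, hz⟩)
  have hderiv : HasDerivAt (fun x : ℂ ↦ π * Complex.cot (π * x))
      (-(π ^ 2 / Complex.sin (π * z) ^ 2)) z := by
    refine (((hasDerivAt_cot hsin).comp z ((hasDerivAt_id z).const_mul (π : ℂ))).const_mul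
      (π : ℂ)).congr_deriv ?_
    ring
  have htsum := iteratedDerivWithin_cot_pi_mul_eq_mul_tsum_div_pow (k := 1) le_rfl (z := z) hz
  rw [iteratedDerivWithin_one,
    derivWithin_of_isOpen UpperHalfPlane.isOpen_upperHalfPlaneSet hz, hderiv.deriv] at htsum
  have hsummable : Summable fun n : ℤ ↦ 1 / (z + n) ^ 2 :=
    (EisensteinSeries.linear_right_summable z 1 (k := 2) le_rfl).congr fun n ↦ by simp
  rw [show (π : ℂ) ^ 2 / Complex.sin (π * z) ^ 2 = ∑' n : ℤ, 1 / (z + n) ^ 2 by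
    simpa using congrArg Neg.neg htsum]
  exact hsummable.hasSum

lemma hasSum_natCast_add_one_of_even {f : ℤ → ℝ} {a : ℝ} (hf : HasSum f a) (heven : f.Even) :
    HasSum (fun n : ℕ ↦ f (n + 1)) ((a - f 0) / 2) := by
  have hfold : HasSum (fun n : ℕ ↦ 2 * f n) (a + f 0) := by
    simpa [heven _, two_mul] using hf.nat_add_neg
  convert! ((hasSum_nat_add_iff' 1).mpr hfold).div_const 2 using 1
  · ext n
    push_cast
    ring
  · simp only [Finset.range_one, Finset.sum_singleton, Nat.cast_zero]
    ring

lemma re_one_div_sq (z : ℂ) :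
    (1 / z ^ 2).re = (z.re ^ 2 - z.im ^ 2) / (z.re ^ 2 + z.im ^ 2) ^ 2 := by
  rw [one_div, Complex.inv_re, map_pow, Complex.normSq_apply]
  simp [sq]

lemma hasSum_sq_sub_sq_div_sq_add_sq_of_pos {t : ℝ} (ht : 0 < t) :
    HasSum (fun n : ℕ ↦ (((n : ℝ) + 1) ^ 2 - t ^ 2) / (((n : ℝ) + 1) ^ 2 + t ^ 2) ^ 2)
      (1 / (2 * t ^ 2) - π ^ 2 / (2 * sinh (π * t) ^ 2)) := by
  have hre : ((π : ℂ) ^ 2 / Complex.sin (π * (t * Complex.I)) ^ 2).re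
      = -(π ^ 2 / sinh (π * t) ^ 2) := by
    rw [← mul_assoc, Complex.sin_mul_I, mul_pow, Complex.I_sq, mul_neg_one, div_neg]
    norm_cast
  have hterm (n : ℤ) : (1 / ((t : ℂ) * Complex.I + n) ^ 2).re
      = ((n : ℝ) ^ 2 - t ^ 2) / ((n : ℝ) ^ 2 + t ^ 2) ^ 2 := by
    rw [re_one_div_sq]
    simp
  have hint := Complex.hasSum_re
    (hasSum_one_div_add_intCast_sq (z := t * Complex.I) (by simpa using ht))
  simp only [hterm, hre] at hint
  convert! hasSum_natCast_add_one_of_even hint (fun n ↦ by simp) using 1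
  · simp
  · have hsinh : sinh (π * t) ≠ 0 := (sinh_pos_iff.mpr (mul_pos pi_pos ht)).ne'
    rw [Int.cast_zero]
    field_simp [hsinh]
    ring

lemma hasSum_sq_sub_sq_div_sq_add_sq {β s : ℝ} (hβ : 0 < β) (hs : s ≠ 0) :
    HasSum (fun n : ℕ ↦
        ((((n : ℝ) + 1) * β) ^ 2 - s ^ 2) / ((((n : ℝ) + 1) * β) ^ 2 + s ^ 2) ^ 2)
      (1 / (2 * s ^ 2) - (π ^ 2 / (2 * β ^ 2)) / sinh (π * s / β) ^ 2) := by
  have habs : sinh (π * (|s| / β)) ^ 2 = sinh (π * s / β) ^ 2 := by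
    rw [← sq_abs (sinh (π * s / β)), abs_sinh, abs_div, abs_mul, abs_of_pos pi_pos,
      abs_of_pos hβ, mul_div_assoc]
  have hscaled := (hasSum_sq_sub_sq_div_sq_add_sq_of_pos
    (div_pos (abs_pos.mpr hs) hβ)).div_const (β ^ 2)
  simp only [habs, div_pow, sq_abs] at hscaled
  convert! hscaled using 1
  · ext n
    have hden : (((n : ℝ) + 1) * β) ^ 2 + s ^ 2 ≠ 0 := by positivity
    have hden' : ((n : ℝ) + 1) ^ 2 + s ^ 2 / β ^ 2 ≠ 0 := by positivity
    field_simp [hden, hden']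
  · field_simp

end PartialFractions

section LaplaceTransform

variable (n : ℕ)

lemma integrableOn_pow_mul_exp_neg_mul {b : ℝ} (hb : 0 < b) :
    IntegrableOn (fun r : ℝ ↦ r ^ n * exp (-(b * r))) (Ioi 0) := by
  simpa using integrableOn_rpow_mul_exp_neg_mul_rpow (p := 1) (s := n)
    (neg_one_lt_zero.trans_le n.cast_nonneg) one_pos hb

variable {a : ℂ}

lemma norm_pow_mul_cexp_neg_mul (r : ℝ) :
    ‖(r : ℂ) ^ n * Complex.exp (-(a * r))‖ = |r| ^ n * exp (-(a.re * r)) := by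
  simp [Complex.norm_exp]

lemma integrableOn_pow_mul_cexp_neg_mul (ha : 0 < a.re) :
    IntegrableOn (fun r : ℝ ↦ (r : ℂ) ^ n * Complex.exp (-(a * r))) (Ioi 0) := by
  refine (integrableOn_pow_mul_exp_neg_mul n ha).mono' (by fun_prop) ?_
  filter_upwards [ae_restrict_mem measurableSet_Ioi] with r (hr : 0 < r)
  rw [norm_pow_mul_cexp_neg_mul, abs_of_pos hr]

lemma tendsto_pow_mul_cexp_neg_mul_atTop (ha : 0 < a.re) :
    Tendsto (fun r : ℝ ↦ (r : ℂ) ^ n * Complex.exp (-(a * r))) atTop (𝓝 0) := by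
  rw [tendsto_zero_iff_norm_tendsto_zero]
  refine (tendsto_rpow_mul_exp_neg_mul_atTop_nhds_zero n a.re ha).congr' ?_
  filter_upwards [eventually_gt_atTop 0] with r hr
  rw [norm_pow_mul_cexp_neg_mul, abs_of_pos hr, rpow_natCast, neg_mul]

theorem integral_pow_mul_cexp_neg_mul_Ioi (ha : 0 < a.re) :
    ∫ r in Ioi (0 : ℝ), (r : ℂ) ^ n * Complex.exp (-(a * r)) = n.factorial / a ^ (n + 1) := by
  have ha0 : a ≠ 0 := fun h ↦ by simp [h] at ha
  induction n with
  | zero =>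
    simpa [div_eq_mul_inv] using integral_exp_mul_complex_Ioi (a := -a) (by simpa using ha) 0
  | succ n ih =>
    have hderiv : ∀ r ∈ Ici (0 : ℝ),
        HasDerivAt (fun r : ℝ ↦ (r : ℂ) ^ (n + 1) * Complex.exp (-(a * r)))
          ((n + 1) * ((r : ℂ) ^ n * Complex.exp (-(a * r)))
            - a * ((r : ℂ) ^ (n + 1) * Complex.exp (-(a * r)))) r := by
      intro r _
      have hr : HasDerivAt (fun r : ℝ ↦ (r : ℂ)) 1 r := Complex.ofRealCLM.hasDerivAt
      refine ((hr.pow (n + 1)).mul (hr.const_mul a).neg.cexp).congr_deriv ?_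
      push_cast
      simp only [Pi.neg_apply, Pi.pow_apply]
      ring
    have hn := (integrableOn_pow_mul_cexp_neg_mul n ha).const_mul ((n : ℂ) + 1)
    have hsucc := (integrableOn_pow_mul_cexp_neg_mul (n + 1) ha).const_mul a
    have hparts := integral_Ioi_of_hasDerivAt_of_tendsto' hderiv (hn.sub hsucc)
      (tendsto_pow_mul_cexp_neg_mul_atTop (n + 1) ha)
    rw [integral_sub hn hsucc, integral_const_mul, integral_const_mul, ih] at hparts
    have hrec : a * ∫ r in Ioi (0 : ℝ), (r : ℂ) ^ (n + 1) * Complex.exp (-(a * r))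
        = (n + 1) * (n.factorial / a ^ (n + 1)) := by
      simpa using (sub_eq_zero.mp (by simpa using hparts)).symm
    rw [← mul_right_inj' ha0, hrec, Nat.factorial_succ]
    push_cast
    field_simp
    ring

theorem integral_id_mul_cos_mul_exp_neg_mul_Ioi (s : ℝ) {b : ℝ} (hb : 0 < b) :
    ∫ r in Ioi (0 : ℝ), r * cos (r * s) * exp (-(b * r))
      = (b ^ 2 - s ^ 2) / (b ^ 2 + s ^ 2) ^ 2 := by
  set a : ℂ := b - s * Complex.I with ha_def
  have ha : 0 < a.re := by simpa [ha_def] using hb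
  have hre (r : ℝ) :
      ((r : ℂ) ^ 1 * Complex.exp (-(a * r))).re = r * cos (r * s) * exp (-(b * r)) := by
    have hexp_re : (-(a * r)).re = -(b * r) := by simp [ha_def]
    have hexp_im : (-(a * r)).im = r * s := by simp [ha_def, mul_comm]
    rw [pow_one, Complex.re_ofReal_mul, Complex.exp_re, hexp_re, hexp_im]
    ring
  calc ∫ r in Ioi (0 : ℝ), r * cos (r * s) * exp (-(b * r))
      = (∫ r in Ioi (0 : ℝ), (r : ℂ) ^ 1 * Complex.exp (-(a * r))).re := by
        simp only [← hre]
        exact integral_re (integrableOn_pow_mul_cexp_neg_mul 1 ha)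
    _ = (1 / a ^ 2).re := by rw [integral_pow_mul_cexp_neg_mul_Ioi 1 ha]; simp
    _ = (b ^ 2 - s ^ 2) / (b ^ 2 + s ^ 2) ^ 2 := by rw [re_one_div_sq]; simp [ha_def]

end LaplaceTransform

section BoseEinstein

variable {β : ℝ}

lemma hasSum_exp_neg_add_one_mul {x : ℝ} (hx : 0 < x) :
    HasSum (fun n : ℕ ↦ exp (-((n + 1) * x))) (1 / (exp x - 1)) := by
  have hlt : exp (-x) < 1 := exp_lt_one_iff.mpr (neg_neg_of_pos hx)
  convert! (hasSum_geometric_of_lt_one (exp_pos _).le hlt).mul_left (exp (-x)) using 1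
  · ext n
    rw [← exp_nat_mul, ← exp_add]
    ring_nf
  · have hne : exp x - 1 ≠ 0 := (sub_pos.mpr (one_lt_exp_iff.mpr hx)).ne'
    rw [exp_neg]
    field_simp

lemma div_exp_sub_one_le {x : ℝ} (hx : 0 < x) : x / (exp x - 1) ≤ exp (-(x / 2)) := by
  have hpos : 0 < exp x - 1 := sub_pos.mpr (one_lt_exp_iff.mpr hx)
  have hsinh : x / 2 ≤ sinh (x / 2) := self_le_sinh_iff.mpr (by positivity)
  have hfactor : exp (-(x / 2)) * (exp x - 1) = 2 * sinh (x / 2) := by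
    rw [mul_sub, ← exp_add, sinh_eq]
    ring_nf
  rw [div_le_iff₀ hpos, hfactor]
  linarith

lemma integrableOn_pow_succ_div_exp_mul_sub_one (n : ℕ) (hβ : 0 < β) :
    IntegrableOn (fun r : ℝ ↦ r ^ (n + 1) / (exp (β * r) - 1)) (Ioi 0) := by
  refine ((integrableOn_pow_mul_exp_neg_mul n (half_pos hβ)).const_mul β⁻¹).mono'
    (Measurable.aestronglyMeasurable (by fun_prop)) ?_
  filter_upwards [ae_restrict_mem measurableSet_Ioi] with r (hr : 0 < r)
  have hβr : 0 < β * r := mul_pos hβ hr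
  have hpos : 0 < exp (β * r) - 1 := sub_pos.mpr (one_lt_exp_iff.mpr hβr)
  calc ‖r ^ (n + 1) / (exp (β * r) - 1)‖
      = β⁻¹ * (r ^ n * (β * r / (exp (β * r) - 1))) := by
        rw [norm_of_nonneg (by positivity), pow_succ]
        field_simp
    _ ≤ β⁻¹ * (r ^ n * exp (-(β * r / 2))) := by gcongr; exact div_exp_sub_one_le hβr
    _ = β⁻¹ * (r ^ n * exp (-(β / 2 * r))) := by ring_nf

theorem hasSum_integral_mul_exp_neg_add_one_mul (hβ : 0 < β) {f : ℝ → ℝ}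
    (hf : IntegrableOn (fun r ↦ f r / (exp (β * r) - 1)) (Ioi 0)) :
    HasSum (fun n : ℕ ↦ ∫ r in Ioi (0 : ℝ), f r * exp (-((n + 1) * β * r)))
      (∫ r in Ioi (0 : ℝ), f r / (exp (β * r) - 1)) := by
  have hpos : ∀ r ∈ Ioi (0 : ℝ), 0 < exp (β * r) - 1 := fun r hr ↦
    sub_pos.mpr (one_lt_exp_iff.mpr (mul_pos hβ hr))
  have hexpand (c : ℝ) {r : ℝ} (hr : r ∈ Ioi 0) :
      HasSum (fun n : ℕ ↦ c * exp (-((n + 1) * β * r))) (c / (exp (β * r) - 1)) := by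
    simpa only [mul_assoc, mul_one_div] using
      (hasSum_exp_neg_add_one_mul (mul_pos hβ hr)).mul_left c
  have hfmeas : AEStronglyMeasurable f (volume.restrict (Ioi 0)) := by
    refine (hf.1.mul (g := fun r ↦ exp (β * r) - 1) (by fun_prop)).congr ?_
    filter_upwards [ae_restrict_mem measurableSet_Ioi] with r hr
    exact div_mul_cancel₀ _ (hpos r hr).ne'
  refine hasSum_integral_of_dominated_convergence
    (fun n r ↦ |f r| * exp (-((n + 1) * β * r))) (fun n ↦ hfmeas.mul (by fun_prop))
    (fun n ↦ .of_forall fun r ↦ by simp) ?_ (hf.norm.congr ?_) ?_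
  all_goals filter_upwards [ae_restrict_mem measurableSet_Ioi] with r hr
  · exact (hexpand _ hr).summable
  · rw [(hexpand _ hr).tsum_eq, norm_div, norm_of_nonneg (hpos r hr).le, norm_eq_abs]
  · exact hexpand _ hr

lemma integrableOn_id_mul_cos_div_exp_mul_sub_one (s : ℝ) (hβ : 0 < β) :
    IntegrableOn (fun r : ℝ ↦ r * cos (r * s) / (exp (β * r) - 1)) (Ioi 0) := by
  have hcos := (integrableOn_pow_succ_div_exp_mul_sub_one 0 hβ).mul_bdd (c := 1)
    (g := fun r ↦ cos (r * s)) (by fun_prop) (.of_forall fun r ↦ abs_cos_le_one _)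
  exact hcos.congr (.of_forall fun r ↦ by simp only [zero_add, pow_one]; ring)

theorem integral_id_mul_cos_div_exp_mul_sub_one {s : ℝ} (hβ : 0 < β) (hs : s ≠ 0) :
    ∫ r in Ioi (0 : ℝ), r * cos (r * s) / (exp (β * r) - 1) = Cfun β s := by
  have hseries := hasSum_integral_mul_exp_neg_add_one_mul hβ
    (integrableOn_id_mul_cos_div_exp_mul_sub_one s hβ)
  have hterm (n : ℕ) := integral_id_mul_cos_mul_exp_neg_mul_Ioi s (b := (n + 1) * β) (by positivity)
  simp only [hterm] at hseries
  rw [Cfun, if_neg hs]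
  exact hseries.unique (hasSum_sq_sub_sq_div_sq_add_sq hβ hs)

end BoseEinstein

section RadialIntegral

lemma integrable_fun_norm_fin_three {f : ℝ → ℝ} :
    Integrable (fun p : EuclideanSpace ℝ (Fin 3) ↦ f ‖p‖) ↔
      IntegrableOn (fun r ↦ r ^ 2 * f r) (Ioi 0) := by
  simpa using integrable_fun_norm_addHaar (volume : Measure (EuclideanSpace ℝ (Fin 3))) (f := f)

lemma integral_fun_norm_fin_three (f : ℝ → ℝ) :
    ∫ p : EuclideanSpace ℝ (Fin 3), f ‖p‖ = 4 * π * ∫ r in Ioi (0 : ℝ), r ^ 2 * f r := by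
  have hball : volume.real (Metric.ball (0 : EuclideanSpace ℝ (Fin 3)) 1) = π * 4 / 3 := by
    rw [Measure.real, EuclideanSpace.volume_ball_fin_three, ENNReal.ofReal_one, one_pow, one_mul,
      ENNReal.toReal_ofReal (by positivity)]
  rw [integral_fun_norm_addHaar volume f, hball]
  simp only [finrank_euclideanSpace, Fintype.card_fin, Nat.add_one_sub_one, smul_eq_mul,
    nsmul_eq_mul, Nat.cast_ofNat]
  ring

/-- The contribution of a mode of frequency `r` to the vacuum-subtracted thermal two-point function
at inverse temperature `β` and time separation `s`. -/
noncomputable def thermalMode (β s r : ℝ) : ℝ :=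
  1 / r * cos (r * s) / (exp (β * r) - 1)

lemma sq_mul_thermalMode (β s r : ℝ) :
    r ^ 2 * thermalMode β s r = r * cos (r * s) / (exp (β * r) - 1) := by
  obtain rfl | hr := eq_or_ne r 0
  · simp
  · rw [thermalMode]
    field_simp

variable {β : ℝ}

lemma integrable_thermalMode_norm (s : ℝ) (hβ : 0 < β) :
    Integrable fun p : EuclideanSpace ℝ (Fin 3) ↦ thermalMode β s ‖p‖ := by
  simpa only [integrable_fun_norm_fin_three, sq_mul_thermalMode] using
    integrableOn_id_mul_cos_div_exp_mul_sub_one s hβ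

theorem integral_thermalMode_norm {s : ℝ} (hβ : 0 < β) (hs : s ≠ 0) :
    ∫ p : EuclideanSpace ℝ (Fin 3), thermalMode β s ‖p‖ = 4 * π * Cfun β s := by
  simp only [integral_fun_norm_fin_three, sq_mul_thermalMode,
    integral_id_mul_cos_div_exp_mul_sub_one hβ hs]

end RadialIntegral

section EvenFunctions

variable {G F : Type*} [MeasurableSpace G] {μ : Measure G} [NormedAddCommGroup F]
  {φ : G → ℝ} {f g : G → F}

lemma integrable_ite_pos (hφ : Measurable φ) (hf : Integrable f μ) (hg : Integrable g μ) :
    Integrable (fun x ↦ if 0 < φ x then f x else g x) μ :=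
  Integrable.piecewise (s := {x | 0 < φ x}) (measurableSet_lt measurable_const hφ)
    hf.integrableOn hg.integrableOn

variable [InvolutiveNeg G] [MeasurableNeg G] [μ.IsNegInvariant] [NormedSpace ℝ F]

lemma setIntegral_eq_half_integral_of_even {S : Set G} (hS : MeasurableSet S)
    (hcompl : (Sᶜ : Set G) =ᵐ[μ] (-S : Set G)) (hf : Integrable f μ) (heven : f.Even) :
    ∫ x in S, f x ∂μ = (2⁻¹ : ℝ) • ∫ x, f x ∂μ := by
  have hreflect : ∫ x in Sᶜ, f x ∂μ = ∫ x in S, f x ∂μ := by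
    rw [setIntegral_congr_set hcompl, ← neg_preimage]
    simpa only [heven _] using (Measure.measurePreserving_neg μ).setIntegral_preimage_emb
      (MeasurableEquiv.neg G).measurableEmbedding f S
  rw [← integral_add_compl hS hf, hreflect, ← two_smul ℝ, inv_smul_smul₀ two_ne_zero]

theorem integral_ite_pos_of_even (hφ : Measurable φ) (hodd : φ.Odd) (hne : ∀ᵐ x ∂μ, φ x ≠ 0)
    (hf : Integrable f μ) (hg : Integrable g μ) (hf_even : f.Even) (hg_even : g.Even) :
    ∫ x, (if 0 < φ x then f x else g x) ∂μ = (2⁻¹ : ℝ) • (∫ x, f x ∂μ + ∫ x, g x ∂μ) := by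
  let S : Set G := {x | 0 < φ x}
  have hS : MeasurableSet S := measurableSet_lt measurable_const hφ
  have hcompl : (Sᶜ : Set G) =ᵐ[μ] (-S : Set G) := by
    filter_upwards [hne] with x hx
    refine propext ?_
    change ¬ 0 < φ x ↔ 0 < φ (-x)
    rw [hodd, neg_pos, not_lt, le_iff_lt_or_eq, or_iff_left hx]
  have hcompl' : (Sᶜᶜ : Set G) =ᵐ[μ] (-Sᶜ : Set G) := by
    simpa using hcompl.compl
  rw [smul_add, ← setIntegral_eq_half_integral_of_even hS hcompl hf hf_even,
    ← setIntegral_eq_half_integral_of_even hS.compl hcompl' hg hg_even]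
  exact integral_piecewise (s := S) hS hf.integrableOn hg.integrableOn

end EvenFunctions

lemma ae_dual_apply_ne_zero {E : Type*} [NormedAddCommGroup E] [NormedSpace ℝ E]
    [MeasurableSpace E] [BorelSpace E] [FiniteDimensional ℝ E] (μ : Measure E) [μ.IsAddHaarMeasure]
    {ℓ : Module.Dual ℝ E} (hℓ : ℓ ≠ 0) : ∀ᵐ x ∂μ, ℓ x ≠ 0 := by
  have hset : {x | ¬ ℓ x ≠ 0} = (LinearMap.ker ℓ : Set E) := by
    ext x
    simp
  rw [ae_iff, hset]
  exact Measure.addHaar_submodule μ _ (LinearMap.ker_eq_top.not.mpr hℓ)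

/-- The vacuum-subtracted NESS two-point function along a static worldline:
with `𝛃(p₁) = β_L` for `p₁ > 0` and `β_R` for `p₁ < 0`, for `s ≠ 0` the integrand is
integrable on `ℝ³` and
`(2π)^{-3} ∫_{ℝ³} (1/‖p‖)·cos(‖p‖s)/(e^{𝛃(p₁)‖p‖} − 1) dp
  = (1/(4π²))·(C_{β_L}(s) + C_{β_R}(s))`. -/
theorem stmt8 (βL βR s : ℝ) (hL : 0 < βL) (hR : 0 < βR) (hs : s ≠ 0) :
    Integrable (fun p : EuclideanSpace ℝ (Fin 3) =>
      (1 / ‖p‖) * Real.cos (‖p‖ * s) /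
        (Real.exp ((if 0 < p 0 then βL else βR) * ‖p‖) - 1)) ∧
    ((2 * π) ^ 3)⁻¹ * ∫ p : EuclideanSpace ℝ (Fin 3),
        (1 / ‖p‖) * Real.cos (‖p‖ * s) /
          (Real.exp ((if 0 < p 0 then βL else βR) * ‖p‖) - 1)
      = (1 / (4 * π ^ 2)) * (Cfun βL s + Cfun βR s) := by
  let ℓ : Module.Dual ℝ (EuclideanSpace ℝ (Fin 3)) := (EuclideanSpace.proj 0).toLinearMap
  have hℓ : ℓ ≠ 0 := fun h ↦ by
    simpa [ℓ] using DFunLike.congr_fun h (EuclideanSpace.single 0 1)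
  have hℓ_meas : Measurable ℓ := ℓ.continuous_of_finiteDimensional.measurable
  have hsplit (p : EuclideanSpace ℝ (Fin 3)) :
      (1 / ‖p‖) * cos (‖p‖ * s) / (exp ((if 0 < p 0 then βL else βR) * ‖p‖) - 1)
        = if 0 < ℓ p then thermalMode βL s ‖p‖ else thermalMode βR s ‖p‖ :=
    apply_ite (thermalMode · s ‖p‖) _ _ _
  have hintL := integrable_thermalMode_norm s hL
  have hintR := integrable_thermalMode_norm s hR
  simp only [hsplit]
  refine ⟨integrable_ite_pos hℓ_meas hintL hintR, ?_⟩
  rw [integral_ite_pos_of_even hℓ_meas (map_neg ℓ) (ae_dual_apply_ne_zero volume hℓ) hintL hintR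
      (fun p ↦ by rw [norm_neg]) (fun p ↦ by rw [norm_neg]),
    integral_thermalMode_norm hL hs, integral_thermalMode_norm hR hs, smul_eq_mul]
  field_simp
  ring
end

section
/- Let β_L, β_R > 0, v ∈ (−1,1) with v ≠ 0, γ := 1/√(1 − v²), d₊ := γ(1 + v), d₋ := γ(1 − v), and 𝛃(p₁) := β_L if p₁ > 0, β_R if p₁ < 0. Then for every s ∈ ℝ with s ≠ 0, the function p ↦ (1/‖p‖)·cos(p₁ γ v s − ‖p‖ γ s)/(e^{𝛃(p₁)‖p‖} − 1) is integrable on ℝ³ and (2π)^{−3}·∫_{ℝ³} (1/‖p‖)·cos(p₁ γ v s − ‖p‖ γ s)/(e^{𝛃(p₁)‖p‖} − 1) dp = 1/(4π² s²) + (1/(8πγvβ_R s))·[coth(π s/(β_R d₋)) − coth(πγ s/β_R)] − (1/(8πγvβ_L s))·[coth(π s/(β_L d₊)) − coth(πγ s/β_L)]. -/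
open MeasureTheory Real Set

/-- The real hyperbolic cotangent. -/
noncomputable def coth (x : ℝ) : ℝ := Real.cosh x / Real.sinh x

/-! By Archimedes' hat-box theorem the pair `(‖p‖, p₁)` has law `2π r dr dx` on the cone `|x| < r`.
Integrating the plane wave `cos (x X - r T)` over `x`, separately on the half-lines `x < 0` and
`0 < x` governed by the two baths, leaves four integrals of the form
`∫₀^∞ sin (a r) / (exp (β r) - 1) dr` with `a ∈ {T, T + X, T - X}`. Expanding the Bose–Einstein
weight into a geometric series turns such an integral into `∑ a / ((n β)² + a²)` over `n ≥ 1`, which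
the Mittag-Leffler expansion of `coth` sums to `π / (2 β) * coth (π a / β) - 1 / (2 a)`. For the
detector `T = γ s` and `X = γ v s`, so `T + X = d₊ s` and `T - X = d₋ s`, and the Doppler factors
satisfy `d₊ d₋ = 1`; hence the reciprocals in the arguments of `coth`. -/

section HatBox

/-- The cone `|x| < r` of pairs `(r, x)`: up to null sets, the values taken by a vector's norm `r`
together with one of its coordinates `x`. -/
def normCoordCone : Set (ℝ × ℝ) := {z | |z.2| < z.1}

lemma measurableSet_normCoordCone : MeasurableSet normCoordCone :=
  measurableSet_lt (by fun_prop) (by fun_prop)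

lemma lintegral_comp_sq_add_sq {G : ℝ → ENNReal} (hG : Measurable G) :
    ∫⁻ q : ℝ × ℝ, G (q.1 ^ 2 + q.2 ^ 2)
      = ENNReal.ofReal (2 * π) * ∫⁻ ρ in Ioi (0 : ℝ), ENNReal.ofReal ρ * G (ρ ^ 2) := by
  have radial (q : ℝ × ℝ) :
      (polarCoord.symm q).1 ^ 2 + (polarCoord.symm q).2 ^ 2 = q.1 ^ 2 := by
    rw [polarCoord_symm_apply]
    linear_combination q.1 ^ 2 * sin_sq_add_cos_sq q.2
  rw [← lintegral_comp_polarCoord_symm, polarCoord_target]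
  simp_rw [radial, smul_eq_mul]
  rw [Measure.volume_eq_prod, ← Measure.prod_restrict, lintegral_prod _ (by fun_prop)]
  simp_rw [lintegral_const, Measure.restrict_apply_univ, Real.volume_Ioo]
  rw [lintegral_mul_const _ (by fun_prop), mul_comm, sub_neg_eq_add, ← two_mul]

lemma image_sqrt_sq_add_sq_Ioi (x : ℝ) : (fun ρ => √(x ^ 2 + ρ ^ 2)) '' Ioi 0 = Ioi |x| := by
  ext r
  constructor
  · rintro ⟨ρ, hρ : 0 < ρ, rfl⟩
    refine Real.lt_sqrt_of_sq_lt ?_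
    rw [sq_abs]
    exact lt_add_of_pos_right _ (by positivity)
  · intro (hr : |x| < r)
    have hpos : 0 < r ^ 2 - x ^ 2 := sub_pos.2 (sq_lt_sq.2 (hr.trans_le (le_abs_self r)))
    refine ⟨√(r ^ 2 - x ^ 2), Real.sqrt_pos.2 hpos, ?_⟩
    dsimp only
    rw [Real.sq_sqrt hpos.le, add_sub_cancel, Real.sqrt_sq ((abs_nonneg x).trans hr.le)]

lemma hasDerivAt_sqrt_sq_add_sq (x : ℝ) {ρ : ℝ} (hρ : ρ ≠ 0) :
    HasDerivAt (fun ρ => √(x ^ 2 + ρ ^ 2)) (ρ / √(x ^ 2 + ρ ^ 2)) ρ := by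
  convert! ((hasDerivAt_pow 2 ρ).const_add (x ^ 2)).sqrt (by positivity) using 1
  field_simp
  norm_num [mul_comm]

lemma lintegral_comp_sqrt_sq_add_sq (x : ℝ) (G : ℝ → ENNReal) :
    ∫⁻ ρ in Ioi (0 : ℝ), ENNReal.ofReal ρ * G √(x ^ 2 + ρ ^ 2)
      = ∫⁻ r in Ioi |x|, ENNReal.ofReal r * G r := by
  have hmono : MonotoneOn (fun ρ => √(x ^ 2 + ρ ^ 2)) (Ioi 0) := fun a (ha : 0 < a) b _ hab =>
    Real.sqrt_le_sqrt (by gcongr)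
  rw [← image_sqrt_sq_add_sq_Ioi,
    lintegral_image_eq_lintegral_deriv_mul_of_monotoneOn measurableSet_Ioi
      (fun ρ (hρ : 0 < ρ) => (hasDerivAt_sqrt_sq_add_sq x hρ.ne').hasDerivWithinAt) hmono]
  refine setLIntegral_congr_fun measurableSet_Ioi fun ρ (hρ : 0 < ρ) => ?_
  have hsqrt : √(x ^ 2 + ρ ^ 2) ≠ 0 := by positivity
  rw [← mul_assoc, ← ENNReal.ofReal_mul (by positivity), div_mul_cancel₀ _ hsqrt]

lemma measurePreserving_coord_prod (i : Fin 3) :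
    MeasurePreserving fun p : EuclideanSpace ℝ (Fin 3) =>
      ((p i, p (i.succAbove 0), p (i.succAbove 1)) : ℝ × ℝ × ℝ) :=
  ((MeasurePreserving.id volume).prod (volume_preserving_finTwoArrow ℝ)).comp
    ((volume_preserving_piFinSuccAbove (fun _ => ℝ) i).comp (PiLp.volume_preserving_ofLp (Fin 3)))

lemma norm_eq_sqrt_coord (i : Fin 3) (p : EuclideanSpace ℝ (Fin 3)) :
    ‖p‖ = √(p i ^ 2 + (p (i.succAbove 0) ^ 2 + p (i.succAbove 1) ^ 2)) := by
  simp [EuclideanSpace.norm_eq, Fin.sum_univ_succAbove _ i]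

theorem lintegral_comp_norm_coord (i : Fin 3) {F : ℝ × ℝ → ENNReal} (hF : Measurable F) :
    ∫⁻ p : EuclideanSpace ℝ (Fin 3), F (‖p‖, p i)
      = ∫⁻ z in normCoordCone, ENNReal.ofReal (2 * π * z.1) * F z := by
  have slice (x : ℝ) : ∫⁻ q : ℝ × ℝ, F (√(x ^ 2 + (q.1 ^ 2 + q.2 ^ 2)), x)
      = ∫⁻ r, normCoordCone.indicator (fun z => ENNReal.ofReal (2 * π * z.1) * F z) (r, x) := by
    rw [lintegral_comp_sq_add_sq (G := fun t => F (√(x ^ 2 + t), x)) (by fun_prop),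
      lintegral_comp_sqrt_sq_add_sq x (fun r => F (r, x)), ← lintegral_const_mul _ (by fun_prop),
      ← lintegral_indicator measurableSet_Ioi]
    refine lintegral_congr fun r => ?_
    simp only [indicator, normCoordCone, mem_Ioi, mem_ofPred_eq,
      ENNReal.ofReal_mul two_pi_pos.le, mul_assoc (ENNReal.ofReal _)]
  simp_rw [norm_eq_sqrt_coord i]
  rw [(measurePreserving_coord_prod i).lintegral_comp
      (f := fun q => F (√(q.1 ^ 2 + (q.2.1 ^ 2 + q.2.2 ^ 2)), q.1)) (by fun_prop),
    Measure.volume_eq_prod, lintegral_prod _ (by fun_prop)]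
  simp_rw [slice]
  rw [← lintegral_indicator measurableSet_normCoordCone, Measure.volume_eq_prod,
    lintegral_prod_symm]
  exact (Measurable.indicator (by fun_prop) measurableSet_normCoordCone).aemeasurable

-- Archimedes' hat-box theorem: on each sphere of radius `r`, a coordinate is uniformly distributed
-- on `(-r, r)`, with total mass `4 π r ^ 2`.
theorem map_norm_coord_volume (i : Fin 3) :
    (volume : Measure (EuclideanSpace ℝ (Fin 3))).map (fun p => (‖p‖, p i))
      = (volume.restrict normCoordCone).withDensity fun z => ENNReal.ofReal (2 * π * z.1) := by
  ext A hA
  have hA_ind : Measurable (A.indicator (1 : ℝ × ℝ → ENNReal)) := measurable_one.indicator hA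
  rw [← lintegral_indicator_one hA, ← lintegral_indicator_one hA,
    lintegral_map hA_ind (by fun_prop),
    lintegral_withDensity_eq_lintegral_mul _ (by fun_prop) hA_ind,
    lintegral_comp_norm_coord i hA_ind]
  rfl

variable {E : Type*} [NormedAddCommGroup E] [NormedSpace ℝ E] {F : ℝ × ℝ → E}

lemma ofReal_two_pi_mul_fst_toReal_smul (F : ℝ × ℝ → E) :
    EqOn (fun z => (ENNReal.ofReal (2 * π * z.1)).toReal • F z) (fun z => (2 * π * z.1) • F z)
      normCoordCone := fun z hz => by
  have hz_pos : 0 < z.1 := (abs_nonneg z.2).trans_lt hz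
  simp only [ENNReal.toReal_ofReal (show 0 ≤ 2 * π * z.1 by positivity)]

theorem integrable_comp_norm_coord_iff (i : Fin 3) (hF : StronglyMeasurable F) :
    Integrable (fun p : EuclideanSpace ℝ (Fin 3) => F (‖p‖, p i))
      ↔ IntegrableOn (fun z => (2 * π * z.1) • F z) normCoordCone := by
  rw [← Function.comp_def F, ← integrable_map_measure hF.aestronglyMeasurable (by fun_prop),
    map_norm_coord_volume, integrable_withDensity_iff_integrable_smul' (by fun_prop)
      (.of_forall fun _ => ENNReal.ofReal_lt_top)]
  exact integrableOn_congr_fun (ofReal_two_pi_mul_fst_toReal_smul F) measurableSet_normCoordCone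

theorem setIntegral_normCoordCone (hF : IntegrableOn F normCoordCone) :
    ∫ z in normCoordCone, F z = ∫ r in Ioi (0 : ℝ), ∫ x in (-r)..r, F (r, x) := by
  rw [← integral_indicator measurableSet_normCoordCone, Measure.volume_eq_prod,
    integral_prod _ (by simpa only [Measure.volume_eq_prod] using
      (integrable_indicator_iff measurableSet_normCoordCone).2 hF),
    ← integral_indicator measurableSet_Ioi]
  refine integral_congr_ae (.of_forall fun r => ?_)
  have slice : (fun x => normCoordCone.indicator F (r, x))
      = (Ioo (-r) r).indicator fun x => F (r, x) := by
    ext x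
    simp only [indicator, normCoordCone, mem_ofPred_eq, mem_Ioo, abs_lt]
  dsimp only
  rw [slice, integral_indicator measurableSet_Ioo]
  by_cases hr : 0 < r
  · rw [indicator_of_mem (mem_Ioi.2 hr), ← integral_Ioc_eq_integral_Ioo,
      intervalIntegral.integral_of_le (neg_le_self hr.le)]
  · rw [indicator_of_notMem (notMem_Ioi.2 (not_lt.1 hr)), Ioo_eq_empty (by linarith),
      setIntegral_empty]

theorem integral_comp_norm_coord (i : Fin 3) (hF : StronglyMeasurable F)
    (hint : Integrable fun p : EuclideanSpace ℝ (Fin 3) => F (‖p‖, p i)) :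
    ∫ p : EuclideanSpace ℝ (Fin 3), F (‖p‖, p i)
      = ∫ r in Ioi (0 : ℝ), (2 * π * r) • ∫ x in (-r)..r, F (r, x) := by
  have hmeas : Measurable fun p : EuclideanSpace ℝ (Fin 3) => (‖p‖, p i) := by fun_prop
  simp_rw [← intervalIntegral.integral_smul]
  rw [← setIntegral_normCoordCone ((integrable_comp_norm_coord_iff i hF).1 hint),
    ← integral_map hmeas.aemeasurable hF.aestronglyMeasurable, map_norm_coord_volume,
    integral_withDensity_eq_integral_toReal_smul (by fun_prop)
      (.of_forall fun _ => ENNReal.ofReal_lt_top)]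
  exact setIntegral_congr_fun measurableSet_normCoordCone (ofReal_two_pi_mul_fst_toReal_smul F)

end HatBox

section TwoBaths

variable {wL wR : ℝ → ℝ}

/-- A plane-wave mode of momentum norm `r` and longitudinal momentum `x`, at time lag `T` and
longitudinal distance `X`, weighted by the occupation number `wL r` of the left bath if it moves to
the right (`0 < x`) and by `wR r` of the right bath otherwise; its argument is `(r, x)`. -/
noncomputable def twoBathMode (wL wR : ℝ → ℝ) (T X : ℝ) (z : ℝ × ℝ) : ℝ :=
  1 / z.1 * cos (z.2 * X - z.1 * T) * if 0 < z.2 then wL z.1 else wR z.1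

lemma measurable_twoBathMode (hL : Measurable wL) (hR : Measurable wR) (T X : ℝ) :
    Measurable (twoBathMode wL wR T X) := by
  have hite : Measurable fun z : ℝ × ℝ => if 0 < z.2 then wL z.1 else wR z.1 :=
    Measurable.ite (measurableSet_lt measurable_const measurable_snd) (by fun_prop) (by fun_prop)
  unfold twoBathMode
  fun_prop

lemma abs_twoBathMode_le (T X : ℝ) (z : ℝ × ℝ) :
    |twoBathMode wL wR T X z| ≤ |1 / z.1| * (|wL z.1| + |wR z.1|) := by
  have hite : |if 0 < z.2 then wL z.1 else wR z.1| ≤ |wL z.1| + |wR z.1| := by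
    split_ifs
    · exact le_add_of_nonneg_right (abs_nonneg _)
    · exact le_add_of_nonneg_left (abs_nonneg _)
  rw [twoBathMode, abs_mul, abs_mul]
  gcongr
  exact mul_le_of_le_one_right (abs_nonneg _) (abs_cos_le_one _)

theorem integrable_twoBathMode (i : Fin 3) (hL : Measurable wL) (hR : Measurable wR)
    (hL_int : IntegrableOn (fun r => r * wL r) (Ioi 0))
    (hR_int : IntegrableOn (fun r => r * wR r) (Ioi 0)) (T X : ℝ) :
    Integrable fun p : EuclideanSpace ℝ (Fin 3) => twoBathMode wL wR T X (‖p‖, p i) := by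
  have dominant : Integrable fun p : EuclideanSpace ℝ (Fin 3) =>
      |1 / ‖p‖| * (|wL ‖p‖| + |wR ‖p‖|) := by
    refine (integrable_fun_norm_addHaar volume (f := fun r => |1 / r| * (|wL r| + |wR r|))).2 ?_
    refine IntegrableOn.congr_fun (hL_int.abs.add hR_int.abs) (fun r (hr : 0 < r) => ?_)
      measurableSet_Ioi
    simp only [Pi.add_apply, finrank_euclideanSpace_fin, Nat.add_one_sub_one, smul_eq_mul,
      abs_mul, abs_of_pos hr, abs_of_pos (one_div_pos.2 hr)]
    field_simp
  have hmeas := (measurable_twoBathMode hL hR T X).comp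
    (show Measurable fun p : EuclideanSpace ℝ (Fin 3) => (‖p‖, p i) by fun_prop)
  exact dominant.mono' hmeas.aestronglyMeasurable
    (.of_forall fun p => abs_twoBathMode_le T X (‖p‖, p i))

lemma integral_cos_mul_sub {X : ℝ} (hX : X ≠ 0) (c a b : ℝ) :
    ∫ x in a..b, cos (x * X - c) = (sin (b * X - c) - sin (a * X - c)) / X := by
  simp_rw [mul_comm _ X]
  rw [intervalIntegral.integral_comp_mul_sub (fun t => cos t) hX, integral_cos, smul_eq_mul,
    inv_mul_eq_div]

lemma intervalIntegral_ite_pos {f g : ℝ → ℝ} (hf : Continuous f) (hg : Continuous g) {r : ℝ}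
    (hr : 0 ≤ r) :
    ∫ x in (-r)..r, (if 0 < x then f x else g x) = (∫ x in (-r)..0, g x) + ∫ x in 0..r, f x := by
  have left : EqOn g (fun x => if 0 < x then f x else g x) (uIoc (-r) 0) := fun x hx => by
    rw [uIoc_of_le (neg_nonpos.2 hr)] at hx
    simp only [if_neg (not_lt.2 hx.2)]
  have right : EqOn f (fun x => if 0 < x then f x else g x) (uIoc 0 r) := fun x hx => by
    rw [uIoc_of_le hr] at hx
    simp only [if_pos hx.1]
  rw [← intervalIntegral.integral_add_adjacent_intervals
      ((hg.intervalIntegrable _ _).congr left) ((hf.intervalIntegrable _ _).congr right),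
    intervalIntegral.integral_congr_ae (.of_forall left),
    intervalIntegral.integral_congr_ae (.of_forall right)]

lemma two_pi_mul_integral_twoBathMode {X : ℝ} (hX : X ≠ 0) (T : ℝ) {r : ℝ} (hr : 0 < r) :
    2 * π * r * ∫ x in (-r)..r, twoBathMode wL wR T X (r, x)
      = 2 * π / X * ((sin ((T + X) * r) * wR r - sin (T * r) * wR r)
          + (sin (T * r) * wL r - sin ((T - X) * r) * wL r)) := by
  have hsplit (x : ℝ) : twoBathMode wL wR T X (r, x) = if 0 < x
      then 1 / r * cos (x * X - r * T) * wL r else 1 / r * cos (x * X - r * T) * wR r :=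
    mul_ite _ _ _ _
  simp_rw [hsplit]
  rw [intervalIntegral_ite_pos (by fun_prop) (by fun_prop) hr.le]
  simp_rw [intervalIntegral.integral_mul_const, intervalIntegral.integral_const_mul,
    integral_cos_mul_sub hX]
  rw [show 0 * X - r * T = -(T * r) by ring, show -r * X - r * T = -((T + X) * r) by ring,
    show r * X - r * T = -((T - X) * r) by ring, sin_neg, sin_neg, sin_neg]
  field_simp
  ring

lemma integrableOn_sin_mul {w : ℝ → ℝ} (hw : IntegrableOn (fun r => r * w r) (Ioi 0)) (a : ℝ) :
    IntegrableOn (fun r => sin (a * r) * w r) (Ioi 0) := by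
  have hsinc (x : ℝ) : sin x = x * sinc x := by
    rcases eq_or_ne x 0 with rfl | hx
    · simp
    · rw [sinc_of_ne_zero hx, mul_div_cancel₀ _ hx]
  have hbdd : IntegrableOn (fun r => sinc (a * r) * (r * w r)) (Ioi 0) :=
    Integrable.bdd_mul hw (continuous_sinc.comp (by fun_prop)).aestronglyMeasurable
      (.of_forall fun r => abs_sinc_le_one (a * r))
  refine (hbdd.const_mul a).congr (.of_forall fun r => ?_)
  dsimp only
  rw [hsinc]
  ring

theorem integral_twoBathMode (i : Fin 3) (hL : Measurable wL) (hR : Measurable wR)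
    (hL_int : IntegrableOn (fun r => r * wL r) (Ioi 0))
    (hR_int : IntegrableOn (fun r => r * wR r) (Ioi 0)) (T : ℝ) {X : ℝ} (hX : X ≠ 0) :
    ∫ p : EuclideanSpace ℝ (Fin 3), twoBathMode wL wR T X (‖p‖, p i)
      = 2 * π / X * (((∫ r in Ioi 0, sin ((T + X) * r) * wR r) - ∫ r in Ioi 0, sin (T * r) * wR r)
          + ((∫ r in Ioi 0, sin (T * r) * wL r) - ∫ r in Ioi 0, sin ((T - X) * r) * wL r)) := by
  have hL_sin := integrableOn_sin_mul hL_int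
  have hR_sin := integrableOn_sin_mul hR_int
  have hL_sub : IntegrableOn (fun r => sin (T * r) * wL r - sin ((T - X) * r) * wL r) (Ioi 0) :=
    (hL_sin _).sub (hL_sin _)
  have hR_sub : IntegrableOn (fun r => sin ((T + X) * r) * wR r - sin (T * r) * wR r) (Ioi 0) :=
    (hR_sin _).sub (hR_sin _)
  rw [integral_comp_norm_coord i (measurable_twoBathMode hL hR T X).stronglyMeasurable
    (integrable_twoBathMode i hL hR hL_int hR_int T X)]
  simp_rw [smul_eq_mul]
  rw [setIntegral_congr_fun measurableSet_Ioi
      (fun r (hr : 0 < r) => two_pi_mul_integral_twoBathMode hX T hr),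
    integral_const_mul, integral_add hR_sub hL_sub, integral_sub (hR_sin _) (hR_sin _),
    integral_sub (hL_sin _) (hL_sin _)]

end TwoBaths

section CothSeries

lemma cot_ofReal_mul_I (y : ℝ) : Complex.cot (y * Complex.I) = -Complex.I * coth y := by
  rw [Complex.cot, Complex.cos_mul_I, Complex.sin_mul_I, coth, Complex.ofReal_div,
    Complex.ofReal_cosh, Complex.ofReal_sinh, div_mul_eq_div_div_swap, Complex.div_I]
  ring

lemma ofReal_mul_I_mem_integerComplement {y : ℝ} (hy : y ≠ 0) :
    (y * Complex.I : ℂ) ∈ Complex.integerComplement := by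
  rintro ⟨n, hn⟩
  simpa [hy.symm] using congrArg Complex.im hn

lemma cotTerm_ofReal_mul_I {y : ℝ} (hy : y ≠ 0) (n : ℕ) :
    cotTerm (y * Complex.I) n
      = -2 * Complex.I * ((y / (((n : ℝ) + 1) ^ 2 + y ^ 2) : ℝ) : ℂ) := by
  have hden : ((y * Complex.I + (n + 1)) * (y * Complex.I - (n + 1)) : ℂ)
      = -((((n : ℝ) + 1) ^ 2 + y ^ 2 : ℝ) : ℂ) := by
    push_cast
    linear_combination (y : ℂ) ^ 2 * Complex.I_sq
  rw [cotTerm_identity (ofReal_mul_I_mem_integerComplement hy), hden, Complex.ofReal_div,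
    one_div, inv_neg]
  ring

theorem hasSum_div_sq_add_sq {y : ℝ} (hy : y ≠ 0) :
    HasSum (fun n : ℕ => y / (((n : ℝ) + 1) ^ 2 + y ^ 2))
      (π / 2 * coth (π * y) - 1 / (2 * y)) := by
  have hyI := ofReal_mul_I_mem_integerComplement hy
  have hsum : HasSum (cotTerm (y * Complex.I))
      (π * Complex.cot (π * (y * Complex.I)) - 1 / (y * Complex.I)) :=
    cot_series_rep' hyI ▸ (summable_cotTerm hyI).hasSum
  have hvalue : π * Complex.cot (π * (y * Complex.I)) - 1 / (y * Complex.I)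
      = -2 * Complex.I * ((π / 2 * coth (π * y) - 1 / (2 * y) : ℝ) : ℂ) := by
    rw [← mul_assoc, ← Complex.ofReal_mul, cot_ofReal_mul_I, one_div, mul_inv,
      Complex.inv_I]
    push_cast
    ring
  simp_rw [funext (cotTerm_ofReal_mul_I hy), hvalue] at hsum
  exact Complex.hasSum_ofReal.1 <| (hasSum_mul_left_iff (by simp)).1 hsum

lemma hasSum_div_mul_sq_add_sq {β a : ℝ} (hβ : 0 < β) (ha : a ≠ 0) :
    HasSum (fun n : ℕ => a / ((((n : ℝ) + 1) * β) ^ 2 + a ^ 2))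
      (π / (2 * β) * coth (π * a / β) - 1 / (2 * a)) := by
  convert! (hasSum_div_sq_add_sq (div_ne_zero ha hβ.ne')).mul_left β⁻¹ using 1
  · ext n
    have : (((n : ℝ) + 1) * β) ^ 2 + a ^ 2 ≠ 0 := by positivity
    have : ((n : ℝ) + 1) ^ 2 + (a / β) ^ 2 ≠ 0 := by positivity
    field_simp
  · rw [mul_div_assoc]
    field_simp

end CothSeries

section BoseEinstein

/-- The Bose–Einstein occupation number of a mode of energy `r` at inverse temperature `β`. -/
noncomputable def boseEinstein (β r : ℝ) : ℝ := (exp (β * r) - 1)⁻¹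

variable {β : ℝ}

lemma measurable_boseEinstein (β : ℝ) : Measurable (boseEinstein β) := by
  unfold boseEinstein
  fun_prop

lemma mul_exp_half_le_exp_sub_one {x : ℝ} (hx : 0 ≤ x) : x * exp (x / 2) ≤ exp x - 1 := by
  have hsinh : x / 2 ≤ sinh (x / 2) := Real.self_le_sinh_iff.2 (by positivity)
  calc x * exp (x / 2) ≤ 2 * sinh (x / 2) * exp (x / 2) := by gcongr; linarith
    _ = exp (x / 2 + x / 2) - exp (-(x / 2) + x / 2) := by
      rw [Real.sinh_eq, Real.exp_add, Real.exp_add]; ring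
    _ = exp x - 1 := by rw [add_halves, neg_add_cancel, Real.exp_zero]

lemma integrableOn_mul_boseEinstein (hβ : 0 < β) :
    IntegrableOn (fun r => r * boseEinstein β r) (Ioi 0) := by
  have dominant : IntegrableOn (fun r => β⁻¹ * exp (-(β / 2) * r)) (Ioi 0) :=
    (integrableOn_exp_mul_Ioi (by linarith) 0).const_mul _
  refine dominant.mono' (measurable_id.mul (measurable_boseEinstein β)).aestronglyMeasurable
    ((ae_restrict_iff' measurableSet_Ioi).2 (.of_forall fun r (hr : 0 < r) => ?_))
  have hexp : 0 < exp (β * r) - 1 := sub_pos.2 (one_lt_exp_iff.2 (by positivity))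
  rw [boseEinstein, ← div_eq_mul_inv, Real.norm_of_nonneg (by positivity)]
  calc r / (exp (β * r) - 1) ≤ r / (β * r * exp (β * r / 2)) := by
        gcongr; exact mul_exp_half_le_exp_sub_one (by positivity)
    _ = β⁻¹ * exp (-(β / 2) * r) := by
        rw [neg_mul, Real.exp_neg, div_mul_eq_mul_div]; field_simp

lemma hasSum_boseEinstein {r : ℝ} (h : 0 < β * r) :
    HasSum (fun n : ℕ => exp (-((n + 1) * β) * r)) (boseEinstein β r) := by
  have hq : exp (-(β * r)) < 1 := Real.exp_lt_one_iff.2 (neg_neg_of_pos h)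
  convert! (hasSum_geometric_of_lt_one (exp_nonneg _) hq).mul_left (exp (-(β * r))) using 1
  · ext n
    rw [← Real.exp_nat_mul, ← Real.exp_add]
    ring_nf
  · rw [boseEinstein, Real.exp_neg, ← mul_inv, mul_sub, mul_one, mul_inv_cancel₀ (exp_ne_zero _)]

theorem hasSum_integral_mul_exp_boseEinstein (hβ : 0 < β) {f : ℝ → ℝ} (hf : Measurable f)
    (hint : IntegrableOn (fun r => f r * boseEinstein β r) (Ioi 0)) :
    HasSum (fun n : ℕ => ∫ r in Ioi 0, f r * exp (-((n + 1) * β) * r))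
      (∫ r in Ioi 0, f r * boseEinstein β r) := by
  have hsum : ∀ᵐ r ∂volume.restrict (Ioi (0 : ℝ)),
      HasSum (fun n : ℕ => exp (-((n + 1) * β) * r)) (boseEinstein β r) :=
    (ae_restrict_iff' measurableSet_Ioi).2 (.of_forall fun r hr =>
      hasSum_boseEinstein (mul_pos hβ hr))
  refine hasSum_integral_of_dominated_convergence
    (fun n r => |f r| * exp (-((n + 1) * β) * r)) (fun n => by fun_prop)
    (fun n => .of_forall fun r => ?_) ?_ ?_ ?_
  · rw [norm_mul, Real.norm_eq_abs, Real.norm_of_nonneg (exp_nonneg _)]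
  · filter_upwards [hsum] with r hr using hr.summable.mul_left _
  · refine hint.abs.congr ?_
    filter_upwards [hsum] with r hr
    rw [(hr.mul_left _).tsum_eq, abs_mul, abs_of_nonneg (hr.nonneg fun n => exp_nonneg _)]
  · filter_upwards [hsum] with r hr using hr.mul_left _

lemma integral_sin_mul_exp {c : ℝ} (hc : 0 < c) (a : ℝ) :
    ∫ r in Ioi 0, sin (a * r) * exp (-c * r) = a / (c ^ 2 + a ^ 2) := by
  have hre : (-c + a * Complex.I : ℂ).re < 0 := by simpa using hc
  have him (r : ℝ) : sin (a * r) * exp (-c * r)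
      = RCLike.im (Complex.exp ((-c + a * Complex.I) * r)) := by
    rw [RCLike.im_eq_complex_im, Complex.exp_im]
    simp [mul_comm]
  simp_rw [him]
  rw [integral_im (integrableOn_exp_mul_complex_Ioi hre 0), integral_exp_mul_complex_Ioi hre,
    RCLike.im_eq_complex_im]
  simp [Complex.normSq_apply, sq, neg_div]

theorem integral_sin_mul_boseEinstein (hβ : 0 < β) {a : ℝ} (ha : a ≠ 0) :
    ∫ r in Ioi 0, sin (a * r) * boseEinstein β r
      = π / (2 * β) * coth (π * a / β) - 1 / (2 * a) := by
  have hseries := hasSum_integral_mul_exp_boseEinstein hβ (f := fun r => sin (a * r)) (by fun_prop)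
    (integrableOn_sin_mul (integrableOn_mul_boseEinstein hβ) a)
  have hterm (n : ℕ) : ∫ r in Ioi 0, sin (a * r) * exp (-((n + 1) * β) * r)
      = a / (((n + 1) * β) ^ 2 + a ^ 2) := integral_sin_mul_exp (by positivity) a
  simp_rw [hterm] at hseries
  exact hseries.unique (hasSum_div_mul_sq_add_sq hβ ha)

end BoseEinstein

theorem stmt10_general (i : Fin 3) {βL βR T X : ℝ} (hL : 0 < βL) (hR : 0 < βR) (hT : T ≠ 0)
    (hX : X ≠ 0) (hadd : T + X ≠ 0) (hsub : T - X ≠ 0) :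
    Integrable (fun p : EuclideanSpace ℝ (Fin 3) => 1 / ‖p‖ * cos (p i * X - ‖p‖ * T) /
        (exp ((if 0 < p i then βL else βR) * ‖p‖) - 1)) ∧
    ((2 * π) ^ 3)⁻¹ * ∫ p : EuclideanSpace ℝ (Fin 3), 1 / ‖p‖ * cos (p i * X - ‖p‖ * T) /
        (exp ((if 0 < p i then βL else βR) * ‖p‖) - 1)
      = 1 / (4 * π ^ 2 * (T ^ 2 - X ^ 2))
        + 1 / (8 * π * X * βR) * (coth (π * (T + X) / βR) - coth (π * T / βR))
        - 1 / (8 * π * X * βL) * (coth (π * (T - X) / βL) - coth (π * T / βL)) := by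
  have hmode (p : EuclideanSpace ℝ (Fin 3)) : 1 / ‖p‖ * cos (p i * X - ‖p‖ * T) /
      (exp ((if 0 < p i then βL else βR) * ‖p‖) - 1)
        = twoBathMode (boseEinstein βL) (boseEinstein βR) T X (‖p‖, p i) := by
    rw [twoBathMode, div_eq_mul_inv, ← boseEinstein, ← apply_ite (boseEinstein · ‖p‖)]
  have hL_meas := measurable_boseEinstein βL
  have hR_meas := measurable_boseEinstein βR
  have hL_int := integrableOn_mul_boseEinstein hL
  have hR_int := integrableOn_mul_boseEinstein hR
  simp_rw [hmode]
  refine ⟨integrable_twoBathMode i hL_meas hR_meas hL_int hR_int T X, ?_⟩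
  rw [integral_twoBathMode i hL_meas hR_meas hL_int hR_int T hX,
    integral_sin_mul_boseEinstein hR hadd, integral_sin_mul_boseEinstein hR hT,
    integral_sin_mul_boseEinstein hL hT, integral_sin_mul_boseEinstein hL hsub,
    show T ^ 2 - X ^ 2 = (T + X) * (T - X) by ring]
  field_simp
  ring

/-- The vacuum-subtracted NESS two-point function pulled back along the
inertial worldline of a detector moving with velocity `v`: with `γ = 1/√(1−v²)`,
`d₊ = γ(1+v)`, `d₋ = γ(1−v)` and `𝛃(p₁) = β_L` for `p₁ > 0`, `β_R` for `p₁ < 0`, for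
`s ≠ 0` the integrand is integrable on `ℝ³` and
`(2π)^{-3} ∫_{ℝ³} (1/‖p‖)·cos(p₁γvs − ‖p‖γs)/(e^{𝛃(p₁)‖p‖} − 1) dp
  = 1/(4π²s²) + (1/(8πγvβ_R s))·[coth(πs/(β_R d₋)) − coth(πγs/β_R)]
    − (1/(8πγvβ_L s))·[coth(πs/(β_L d₊)) − coth(πγs/β_L)]`. -/
theorem stmt10 (βL βR v s γ dp dm : ℝ) (hL : 0 < βL) (hR : 0 < βR)
    (hv1 : -1 < v) (hv2 : v < 1) (hv0 : v ≠ 0) (hs : s ≠ 0)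
    (hγ : γ = 1 / Real.sqrt (1 - v ^ 2))
    (hdp : dp = γ * (1 + v)) (hdm : dm = γ * (1 - v)) :
    Integrable (fun p : EuclideanSpace ℝ (Fin 3) =>
      (1 / ‖p‖) * Real.cos (p 0 * γ * v * s - ‖p‖ * γ * s) /
        (Real.exp ((if 0 < p 0 then βL else βR) * ‖p‖) - 1)) ∧
    ((2 * π) ^ 3)⁻¹ * ∫ p : EuclideanSpace ℝ (Fin 3),
        (1 / ‖p‖) * Real.cos (p 0 * γ * v * s - ‖p‖ * γ * s) /
          (Real.exp ((if 0 < p 0 then βL else βR) * ‖p‖) - 1)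
      = 1 / (4 * π ^ 2 * s ^ 2)
        + (1 / (8 * π * γ * v * βR * s)) *
            (coth (π * s / (βR * dm)) - coth (π * γ * s / βR))
        - (1 / (8 * π * γ * v * βL * s)) *
            (coth (π * s / (βL * dp)) - coth (π * γ * s / βL)) := by
  have hv : 0 < 1 - v ^ 2 := by nlinarith
  have hγ_ne : γ ≠ 0 := by rw [hγ]; positivity
  have hγ_sq : γ ^ 2 * (1 - v ^ 2) = 1 := by rw [hγ, div_pow, Real.sq_sqrt hv.le]; field_simp
  have hdpdm : dp * dm = 1 := by rw [hdp, hdm]; linear_combination hγ_sq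
  have hadd : γ * s + γ * v * s = s * dp := by rw [hdp]; ring
  have hsub : γ * s - γ * v * s = s * dm := by rw [hdm]; ring
  have hdp_ne : dp ≠ 0 := left_ne_zero_of_mul_eq_one hdpdm
  have hdm_ne : dm ≠ 0 := right_ne_zero_of_mul_eq_one hdpdm
  have hR_arg : π * s / (βR * dm) = π * (γ * s + γ * v * s) / βR := by
    rw [hadd, eq_inv_of_mul_eq_one_left hdpdm]; field_simp
  have hL_arg : π * s / (βL * dp) = π * (γ * s - γ * v * s) / βL := by
    rw [hsub, eq_inv_of_mul_eq_one_right hdpdm]; field_simp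
  have hs_sq : s ^ 2 = (γ * s) ^ 2 - (γ * v * s) ^ 2 := by linear_combination -s ^ 2 * hγ_sq
  have h := stmt10_general 0 hL hR (T := γ * s) (X := γ * v * s) (by positivity) (by positivity)
    (by rw [hadd]; positivity) (by rw [hsub]; positivity)
  rw [hR_arg, hL_arg, hs_sq]
  simpa only [mul_assoc, mul_comm s] using h
end
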